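/- arXiv:1711.09176 — 6 statements merged into one kernel-verified Lean document; each statement's English description precedes it below -/
import Mathlib

section
/- Monotonicity of optimal solutions of the mean-based revenue LP: let (v,q) be a value distribution with all q_i > 0, and let x ∈ [0,1]^m, u ∈ [0,∞)^m be a feasible point of the mean-based revenue LP (i.e. u_i ≥ (v_i − v_j)·x_j for all i > j) whose objective value ∑_{i=1}^m q_i (v_i x_i − u_i) equals MBRev(v,q). Then x is nondecreasing: x_i ≤ x_j for all i < j. -/
/-!
If `x i > x j` for some `i < j`, raise `x j` to `x i` and leave everything else unchanged. For `k > j`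
the new constraint follows from the one for the pair `(k, i)`, because `v k - v j ≤ v k - v i`, so the
point stays feasible; the objective grows by `q j * v j * (x i - x j) > 0`, as `v j > v i ≥ 0`.
This contradicts optimality.
-/

open Finset

/-- The mean-based revenue of a value distribution `(v, q)` on `m` values. -/
noncomputable def MBRev (m : ℕ) (v q : Fin m → ℝ) : ℝ :=
  sSup { r : ℝ | ∃ x u : Fin m → ℝ,
    (∀ i, 0 ≤ x i ∧ x i ≤ 1) ∧ (∀ i, 0 ≤ u i) ∧
    (∀ i j, j < i → (v i - v j) * x j ≤ u i) ∧
    r = ∑ i, q i * (v i * x i - u i) }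

/-- Any optimal solution of the mean-based revenue LP has nondecreasing
allocation probabilities `x`. -/
theorem optimal_solution_monotone (m : ℕ) (v q : Fin m → ℝ)
    (hv : StrictMono v) (hv0 : ∀ i, 0 ≤ v i) (hv1 : ∀ i, v i ≤ 1)
    (hq : ∀ i, 0 < q i) (hqs : ∑ i, q i = 1)
    (x u : Fin m → ℝ)
    (hx : ∀ i, 0 ≤ x i ∧ x i ≤ 1) (hu : ∀ i, 0 ≤ u i)
    (hfeas : ∀ i j, j < i → (v i - v j) * x j ≤ u i)
    (hopt : ∑ i, q i * (v i * x i - u i) = MBRev m v q) :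
    ∀ i j : Fin m, i < j → x i ≤ x j := by
  intro i j hij
  by_contra! hlt
  have hvij := hv hij
  have hvj : 0 < v j := (hv0 i).trans_lt hvij
  -- The supremum defining `MBRev` is a genuine one: the objective is at most `∑ i, q i = 1`.
  have hbdd : BddAbove { r : ℝ | ∃ x u : Fin m → ℝ,
      (∀ i, 0 ≤ x i ∧ x i ≤ 1) ∧ (∀ i, 0 ≤ u i) ∧
      (∀ i j, j < i → (v i - v j) * x j ≤ u i) ∧
      r = ∑ i, q i * (v i * x i - u i) } := by
    refine ⟨1, ?_⟩
    rintro r ⟨y, w, hy, hw, -, rfl⟩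
    rw [← hqs]
    refine Finset.sum_le_sum fun k _ => ?_
    have h1 : v k * y k ≤ 1 := mul_le_one₀ (hv1 k) (hy k).1 (hy k).2
    exact mul_le_of_le_one_right (hq k).le (by linarith [hw k])
  have hle : ∑ k, q k * (v k * Function.update x j (x i) k - u k) ≤ MBRev m v q := by
    refine le_csSup hbdd ⟨Function.update x j (x i), u, fun k => ?_, hu, fun k l hlk => ?_, rfl⟩
    · rcases eq_or_ne k j with rfl | hk
      · simpa using hx i
      · simpa [hk] using hx k
    · rcases eq_or_ne l j with rfl | hl
      · rw [Function.update_self]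
        exact (mul_le_mul_of_nonneg_right (by linarith) (hx i).1).trans
          (hfeas k i (hij.trans hlk))
      · simpa [hl] using hfeas k l hlk
  have hgt : ∑ k, q k * (v k * x k - u k)
      < ∑ k, q k * (v k * Function.update x j (x i) k - u k) := by
    refine Finset.sum_lt_sum (fun k _ => ?_) ⟨j, Finset.mem_univ j, ?_⟩
    · rcases eq_or_ne k j with rfl | hk
      · rw [Function.update_self]
        exact mul_le_mul_of_nonneg_left
          (sub_le_sub_right (mul_le_mul_of_nonneg_left hlt.le hvj.le) _) (hq k).le
      · simp [hk]
    · rw [Function.update_self]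
      exact mul_lt_mul_of_pos_left
        (sub_lt_sub_right (mul_lt_mul_of_pos_left hlt hvj) _) (hq j)
  linarith
end

section
/- Monotonicity of the mean-based payoff: let 0 ≤ v_1 < v_2 < ⋯ < v_m be reals and let 0 ≤ x_1 ≤ x_2 ≤ ⋯ ≤ x_m be reals. Then the function f(i) = v_i·x_i − max_{j∈{1,…,m}} (v_i − v_j)·x_j is nondecreasing in i, i.e. f(i) ≤ f(i') whenever i ≤ i'. -/
/-!
Let `M` be the maximum for the lower index `i`. It suffices to bound each term
`(v i' - v j) * x j` by `v i' * x i' - v i * x i + M`. If `j ≤ i'`, replacing `v i'` by `v i`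
changes the term by `(v i' - v i) * x j ≤ (v i' - v i) * x i' ≤ v i' * x i' - v i * x i`.
If `j ≥ i'`, the term is nonpositive, while `M ≥ 0` and `v i * x i ≤ v i' * x i'`.
-/

open Finset

/-- Monotonicity of the mean-based payoff: if `0 ≤ v 1 < ⋯ < v m` and
`0 ≤ x 1 ≤ ⋯ ≤ x m`, then `f i = v i * x i - max_j (v i - v j) * x j`
is nondecreasing in `i`. -/
theorem mean_based_payoff_monotone (m : ℕ) (hm : 0 < m) (v x : Fin m → ℝ)
    (hv : StrictMono v) (hv0 : ∀ i, 0 ≤ v i)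
    (hx : Monotone x) (hx0 : ∀ i, 0 ≤ x i) :
    ∀ i i' : Fin m, i ≤ i' →
      v i * x i - Finset.univ.sup' ⟨⟨0, hm⟩, Finset.mem_univ _⟩
          (fun j => (v i - v j) * x j)
        ≤ v i' * x i' - Finset.univ.sup' ⟨⟨0, hm⟩, Finset.mem_univ _⟩
          (fun j => (v i' - v j) * x j) := by
  intro i i' hii
  set M := Finset.univ.sup' ⟨⟨0, hm⟩, Finset.mem_univ _⟩ (fun j => (v i - v j) * x j) with hM
  have hle : ∀ j, (v i - v j) * x j ≤ M := fun j =>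
    Finset.le_sup' (fun j => (v i - v j) * x j) (Finset.mem_univ j)
  have hM0 : 0 ≤ M := by simpa using hle i
  have hvv : v i ≤ v i' := hv.monotone hii
  have hvx : v i * x i ≤ v i * x i' := mul_le_mul_of_nonneg_left (hx hii) (hv0 i)
  have key : Finset.univ.sup' ⟨⟨0, hm⟩, Finset.mem_univ _⟩ (fun j => (v i' - v j) * x j)
      ≤ v i' * x i' - v i * x i + M := by
    refine Finset.sup'_le _ _ fun j _ => ?_
    rcases le_total j i' with hj | hj
    · -- `(v i' - v j) * x j = (v i' - v i) * x j + (v i - v j) * x j`, and `x j ≤ x i'`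
      have h := mul_le_mul_of_nonneg_left (hx hj) (sub_nonneg.2 hvv)
      linarith [hle j]
    · -- the left side is nonpositive and the right side nonnegative
      have h1 : (v i' - v j) * x j ≤ 0 :=
        mul_nonpos_of_nonpos_of_nonneg (sub_nonpos.2 (hv.monotone hj)) (hx0 j)
      have h2 := mul_le_mul_of_nonneg_right hvv (hx0 i')
      linarith
  linarith
end

section
/- Upper bound on the mean-based revenue of the truncated equal revenue curve (Theorem: MBRev(D_ERC(H)) ≤ O(log log H), core inequality): for every real H > 1 and every nondecreasing function x : [1,H] → [0,1], one has ∫_1^H (1/v)·(x(v) − sup_{w∈[1,v)} (1 − w/v)·x(w)) dv ≤ log(1 + log H). Consequently S(H) ≤ log(1 + log H). -/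
/-!
In the variable `t = log v` the competitor `w(v) = v / (1 + log v)` is `φ(t) = t - log (1 + t)`, and
`φ` solves `φ' = 1 - exp (φ - t)`, i.e. `(1 / v) * (1 - w / v) dv = dw / w`. Bounding the inner
supremum below by its value at `w(v)` and changing variables therefore gives
`∫_1^H (1/v) (x v - innerSup x v) dv ≤ ∫_1^H x(v)/v dv - ∫_1^{w(H)} x(u)/u du = ∫_{w(H)}^H x(v)/v dv`,
which is at most `log (H / w(H)) = log (1 + log H)` because `x ≤ 1`.
-/

open MeasureTheory

/-- The "best response" benchmark: `sup_{w ∈ [1,v)} (1 - w/v) * x w`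
(with the supremum of the empty set taken to be `0`, the `Real.sSup`
convention). -/
noncomputable def innerSup (x : ℝ → ℝ) (v : ℝ) : ℝ :=
  sSup ((fun w => (1 - w / v) * x w) '' Set.Ico 1 v)

/-- The mean-based revenue of the equal revenue curve truncated at `H`
(continuous form): the supremum over nondecreasing `x : [1,H] → [0,1]` of
`∫_1^H (1/v) * (x v - sup_{w∈[1,v)} (1 - w/v) * x w) dv`. -/
noncomputable def S (H : ℝ) : ℝ :=
  sSup { r : ℝ | ∃ x : ℝ → ℝ, MonotoneOn x (Set.Icc 1 H) ∧
    (∀ v ∈ Set.Icc (1:ℝ) H, x v ∈ Set.Icc (0:ℝ) 1) ∧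
    r = ∫ v in Set.Icc (1:ℝ) H, (1 / v) * (x v - innerSup x v) }

/-- The competitor `w(v) = v / (1 + log v)`, chosen so that
`(1 / v) * (1 - w / v) = w' / w`. -/
noncomputable def comp (v : ℝ) : ℝ := v / (1 + Real.log v)

lemma comp_hasDerivAt {v : ℝ} (hv : 1 ≤ v) :
    HasDerivAt comp (Real.log v / (1 + Real.log v) ^ 2) v := by
  have hl := Real.log_nonneg hv
  have hv0 : v ≠ 0 := by positivity
  have h := (hasDerivAt_id v).div ((Real.hasDerivAt_log hv0).const_add 1)
    (by positivity : (1 + Real.log v) ≠ 0)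
  refine h.congr_deriv ?_
  simp only [id]
  field_simp
  ring

lemma comp_one : comp 1 = 1 := by simp [comp]

lemma comp_monotoneOn (H : ℝ) : MonotoneOn comp (Set.Icc 1 H) := by
  apply monotoneOn_of_deriv_nonneg (convex_Icc 1 H)
  · exact fun v hv => (comp_hasDerivAt hv.1).continuousAt.continuousWithinAt
  · intro v hv
    rw [interior_Icc] at hv
    exact (comp_hasDerivAt hv.1.le).differentiableAt.differentiableWithinAt
  · intro v hv
    rw [interior_Icc] at hv
    rw [(comp_hasDerivAt hv.1.le).deriv]
    have := Real.log_nonneg hv.1.le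
    positivity

lemma one_le_comp {v : ℝ} (hv : 1 ≤ v) : 1 ≤ comp v := by
  have := comp_monotoneOn v ⟨le_rfl, hv⟩ ⟨hv, le_rfl⟩ hv
  rwa [comp_one] at this

lemma comp_le {v : ℝ} (hv : 1 ≤ v) : comp v ≤ v :=
  div_le_self (by linarith) (by linarith [Real.log_nonneg hv])

lemma comp_lt {v : ℝ} (hv : 1 < v) : comp v < v :=
  div_lt_self (by linarith) (by linarith [Real.log_pos hv])

lemma comp_image {H : ℝ} (hH : 1 ≤ H) : comp '' Set.Icc 1 H = Set.Icc 1 (comp H) := by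
  have hc : ContinuousOn comp (Set.Icc 1 H) :=
    fun v hv => (comp_hasDerivAt hv.1).continuousAt.continuousWithinAt
  apply Set.Subset.antisymm
  · rintro _ ⟨v, hv, rfl⟩
    exact ⟨one_le_comp hv.1, comp_monotoneOn H hv ⟨hH, le_rfl⟩ hv.2⟩
  · have := intermediate_value_Icc hH hc
    rwa [comp_one] at this

lemma comp_identity {v : ℝ} (hv : 1 ≤ v) :
    (1 / v) * (1 - comp v / v) = Real.log v / (1 + Real.log v) ^ 2 * (1 / comp v) := by
  have hl := Real.log_nonneg hv
  have h1 : 1 + Real.log v ≠ 0 := by positivity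
  have hv0 : v ≠ 0 := by positivity
  unfold comp
  field_simp
  ring

lemma le_innerSup {H : ℝ} {x : ℝ → ℝ} (hx : ∀ v ∈ Set.Icc (1 : ℝ) H, x v ∈ Set.Icc (0 : ℝ) 1)
    {v w : ℝ} (hv : v ≤ H) (hw : w ∈ Set.Ico 1 v) : (1 - w / v) * x w ≤ innerSup x v := by
  refine le_csSup ⟨1, ?_⟩ ⟨w, hw, rfl⟩
  rintro _ ⟨u, hu, rfl⟩
  have hxu := hx u ⟨hu.1, hu.2.le.trans hv⟩
  have hv0 : 0 < v := by linarith [hu.1, hu.2]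
  have h0 : 0 ≤ u / v := div_nonneg (by linarith [hu.1]) hv0.le
  have h1 : u / v ≤ 1 := (div_le_one hv0).2 hu.2.le
  exact mul_le_one₀ (by linarith) hxu.1 hxu.2

lemma integral_le {H : ℝ} (hH : 1 < H) {x : ℝ → ℝ} (hm : MonotoneOn x (Set.Icc 1 H))
    (hx : ∀ v ∈ Set.Icc (1 : ℝ) H, x v ∈ Set.Icc (0 : ℝ) 1) :
    (∫ v in Set.Icc (1 : ℝ) H, (1 / v) * (x v - innerSup x v)) ≤ Real.log (1 + Real.log H) := by
  have hlog := Real.log_pos hH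
  -- A non-integrable integrand has junk integral `0`.
  by_cases hint : IntegrableOn (fun v => (1 / v) * (x v - innerSup x v)) (Set.Icc 1 H)
  swap
  · rw [integral_undef hint]
    exact Real.log_nonneg (by linarith)
  have hw1 := one_le_comp hH.le
  have hwH := comp_le hH.le
  have hinv : ContinuousOn (fun v : ℝ => 1 / v) (Set.Icc 1 H) :=
    continuousOn_const.div continuousOn_id fun v hv => by
      have : (1 : ℝ) ≤ v := hv.1
      positivity
  have hg : IntegrableOn (fun v => (1 / v) * x v) (Set.Icc 1 H) :=
    IntegrableOn.continuousOn_mul hinv (hm.integrableOn_isCompact isCompact_Icc) isCompact_Icc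
  have hgI : IntegrableOn (fun v => (1 / v) * x v) (Set.Icc 1 (comp H)) :=
    hg.mono_set (Set.Icc_subset_Icc_right hwH)
  have hder : ∀ v ∈ Set.Icc 1 H,
      HasDerivWithinAt comp (Real.log v / (1 + Real.log v) ^ 2) (Set.Icc 1 H) v :=
    fun v hv => (comp_hasDerivAt hv.1).hasDerivWithinAt
  have hcv := integral_image_eq_integral_deriv_smul_of_monotoneOn measurableSet_Icc hder
    (comp_monotoneOn H) (fun u => (1 / u) * x u)
  have hci := (integrableOn_image_iff_integrableOn_deriv_smul_of_monotoneOn measurableSet_Icc hder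
    (comp_monotoneOn H) (fun u => (1 / u) * x u)).1 (by rwa [comp_image hH.le])
  rw [comp_image hH.le] at hcv
  have hstep : (∫ v in Set.Icc (1 : ℝ) H, (1 / v) * (x v - innerSup x v)) ≤
      ∫ v in Set.Icc (1 : ℝ) H, ((1 / v) * x v -
        (Real.log v / (1 + Real.log v) ^ 2) • ((1 / comp v) * x (comp v))) := by
    -- At `v = 1` the competitor is not in `[1, v)`, so that null set is dropped.
    rw [integral_Icc_eq_integral_Ioc, integral_Icc_eq_integral_Ioc]
    refine setIntegral_mono_on (hint.mono_set Set.Ioc_subset_Icc_self)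
      ((hg.sub hci).mono_set Set.Ioc_subset_Icc_self) measurableSet_Ioc fun v hv => ?_
    have h := le_innerSup hx hv.2 ⟨one_le_comp hv.1.le, comp_lt hv.1⟩
    have hv0 : 0 < 1 / v := one_div_pos.2 (by linarith [hv.1])
    rw [smul_eq_mul, ← mul_assoc, ← comp_identity hv.1.le, mul_assoc, ← mul_sub]
    exact mul_le_mul_of_nonneg_left (by linarith) hv0.le
  refine hstep.trans ?_
  rw [integral_sub hg hci, ← hcv]
  have hI1 : IntervalIntegrable (fun v => (1 / v) * x v) volume 1 (comp H) := by
    rw [intervalIntegrable_iff_integrableOn_Icc_of_le hw1]; exact hgI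
  have hI2 : IntervalIntegrable (fun v => (1 / v) * x v) volume (comp H) H := by
    rw [intervalIntegrable_iff_integrableOn_Icc_of_le hwH]
    exact hg.mono_set (Set.Icc_subset_Icc_left hw1)
  have hI3 : IntervalIntegrable (fun v : ℝ => 1 / v) volume (comp H) H :=
    (hinv.mono (by rw [Set.uIcc_of_le hwH]; exact Set.Icc_subset_Icc_left hw1)).intervalIntegrable
  rw [integral_Icc_eq_integral_Ioc, integral_Icc_eq_integral_Ioc,
    ← intervalIntegral.integral_of_le hH.le, ← intervalIntegral.integral_of_le hw1,
    ← intervalIntegral.integral_add_adjacent_intervals hI1 hI2, add_sub_cancel_left]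
  calc (∫ v in (comp H)..H, (1 / v) * x v) ≤ ∫ v in (comp H)..H, 1 / v := by
        refine intervalIntegral.integral_mono_on hwH hI2 hI3 fun v hv => ?_
        have hv1 : 1 ≤ v := hw1.trans hv.1
        exact mul_le_of_le_one_right (by positivity) (hx v ⟨hv1, hv.2⟩).2
    _ = Real.log (1 + Real.log H) := by
        rw [integral_one_div_of_pos (by linarith) (by linarith)]
        congr 1
        unfold comp
        field_simp

/-- Upper bound on the mean-based revenue of the truncated equal revenue
curve: every nondecreasing `x : [1,H] → [0,1]` yields integral at most
`log (1 + log H)`, and consequently `S H ≤ log (1 + log H)`. -/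
theorem S_le_log_log (H : ℝ) (hH : 1 < H) :
    (∀ x : ℝ → ℝ, MonotoneOn x (Set.Icc 1 H) →
      (∀ v ∈ Set.Icc (1:ℝ) H, x v ∈ Set.Icc (0:ℝ) 1) →
      (∫ v in Set.Icc (1:ℝ) H, (1 / v) * (x v - innerSup x v))
        ≤ Real.log (1 + Real.log H)) ∧
    S H ≤ Real.log (1 + Real.log H) := by
  refine ⟨fun x hm hx => integral_le hH hm hx, ?_⟩
  refine csSup_le ⟨_, fun _ => 0, monotoneOn_const, fun _ _ => by simp, rfl⟩ ?_
  rintro _ ⟨x, hm, hx, rfl⟩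
  exact integral_le hH hm hx
end

section
/- The mean-based revenue lies strictly between the monopoly revenue and the welfare in a doubly-unbounded sense (gap corollary): for every real C > 0 there exists H_0 > 1 such that for all H ≥ H_0 both S(H) ≥ C and 1 + log H ≥ C·(S(H) + 1). (For the equal revenue curve truncated at H this says the mean-based revenue exceeds C times the monopoly revenue, which equals 1, while the welfare 1 + log H exceeds C times the mean-based revenue, which is at most S(H) + 1.) -/
/-!
Substitute `t = log v` and `L = log H`, so that the objective becomes
`∫_0^L inf_{0<d≤t} (x(t) - x(t-d) + e^{-d} x(t-d)) dt`.

*Upper bound* (`obj_le`). A fixed shift `d = log K` bounds the infimum from above. The differences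
`x(t) - x(t-d)` telescope to a contribution of at most `log K`, and the remaining term contributes
at most `log H / K`. Hence `S H ≤ log K + log H / K` for every `K > 1` and `H ≥ K`, so
`S H = o(log H)`.

*Lower bound* (`le_S`). For `x(v) = log v / log H` the integrand, multiplied by `log H`, is the
infimum over `r = v / w > 1` of `(1 - 1/r) log r + (log v) / r`, divided by `v`. That infimum tends
to infinity with `v` (`key_ineq`): for large `r` the first term is large, for bounded `r` the second
is. Averaging against `dv / (v log H)` shows that `S H` is unbounded.
-/

open MeasureTheory

lemma term_nonneg {x : ℝ → ℝ} {v w : ℝ} (h0 : 0 ≤ x w) (hw : w ∈ Set.Ico 1 v) :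
    0 ≤ (1 - w / v) * x w := by
  have hv : 0 < v := by linarith [hw.1, hw.2]
  have : w / v ≤ 1 := (div_le_one hv).2 hw.2.le
  exact mul_nonneg (by linarith) h0

section
variable {x : ℝ → ℝ} {H : ℝ}

lemma term_le (hx : MonotoneOn x (Set.Icc 1 H)) (h01 : ∀ v ∈ Set.Icc (1:ℝ) H, x v ∈ Set.Icc (0:ℝ) 1)
    {v w : ℝ} (hv : v ∈ Set.Icc 1 H) (hw : w ∈ Set.Ico 1 v) :
    (1 - w / v) * x w ≤ x v := by
  have hwm : w ∈ Set.Icc 1 H := ⟨hw.1, hw.2.le.trans hv.2⟩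
  have h1 : x w ≤ x v := hx hwm hv hw.2.le
  have h2 : 0 ≤ w / v := div_nonneg (by linarith [hw.1]) (by linarith [hv.1])
  nlinarith [(h01 w hwm).1]

lemma bdd_terms (hx : MonotoneOn x (Set.Icc 1 H))
    (h01 : ∀ v ∈ Set.Icc (1:ℝ) H, x v ∈ Set.Icc (0:ℝ) 1) {v : ℝ} (hv : v ∈ Set.Icc 1 H) :
    BddAbove ((fun w => (1 - w / v) * x w) '' Set.Ico 1 v) := by
  refine ⟨x v, ?_⟩
  rintro _ ⟨w, hw, rfl⟩
  exact term_le hx h01 hv hw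

lemma innerSup_nonneg (h01 : ∀ v ∈ Set.Icc (1:ℝ) H, x v ∈ Set.Icc (0:ℝ) 1)
    {v : ℝ} (hv : v ∈ Set.Icc 1 H) : 0 ≤ innerSup x v := by
  apply Real.sSup_nonneg
  rintro _ ⟨w, hw, rfl⟩
  exact term_nonneg (h01 w ⟨hw.1, hw.2.le.trans hv.2⟩).1 hw

lemma innerSup_le (hx : MonotoneOn x (Set.Icc 1 H))
    (h01 : ∀ v ∈ Set.Icc (1:ℝ) H, x v ∈ Set.Icc (0:ℝ) 1) {v : ℝ} (hv : v ∈ Set.Icc 1 H) :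
    innerSup x v ≤ x v := by
  refine Real.sSup_le ?_ (h01 v hv).1
  rintro _ ⟨w, hw, rfl⟩
  exact term_le hx h01 hv hw

/-- Monotonicity supplies the measurability of `innerSup x`. -/
lemma innerSup_mono (hx : MonotoneOn x (Set.Icc 1 H))
    (h01 : ∀ v ∈ Set.Icc (1:ℝ) H, x v ∈ Set.Icc (0:ℝ) 1) :
    MonotoneOn (innerSup x) (Set.Icc 1 H) := by
  intro a ha b hb hab
  refine Real.sSup_le ?_ (innerSup_nonneg h01 hb)
  rintro _ ⟨w, hw, rfl⟩
  have hwb : w ∈ Set.Ico 1 b := ⟨hw.1, hw.2.trans_le hab⟩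
  refine le_trans ?_ (le_csSup (bdd_terms hx h01 hb) ⟨w, hwb, rfl⟩)
  have hw0 := (h01 w ⟨hw.1, hw.2.le.trans ha.2⟩).1
  have : w / b ≤ w / a :=
    div_le_div_of_nonneg_left (by linarith [hw.1]) (by linarith [ha.1]) hab
  exact mul_le_mul_of_nonneg_right (by linarith) hw0

end

/-- A function that is monotone on `[a, b]` with `a ≥ 1` is integrable there against `dv / v`. -/
lemma integrable_aux {f : ℝ → ℝ} {a b : ℝ} (ha : 1 ≤ a) (hab : a ≤ b)
    (hf : MonotoneOn f (Set.Icc a b)) :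
    IntervalIntegrable (fun v => (1 / v) * f v) volume a b := by
  have h1 : IntervalIntegrable f volume a b := by
    apply MonotoneOn.intervalIntegrable
    rwa [Set.uIcc_of_le hab]
  apply h1.continuousOn_mul
  rw [Set.uIcc_of_le hab]
  apply ContinuousOn.div continuousOn_const continuousOn_id
  intro v hv
  have : a ≤ v := hv.1
  simp only [id]
  linarith

/-- The upper bound from comparing with the single deviation `w = v / K`. -/
lemma obj_le {x : ℝ → ℝ} {H K : ℝ} (hK : 1 < K) (hKH : K ≤ H) (hx : MonotoneOn x (Set.Icc 1 H))
    (h01 : ∀ v ∈ Set.Icc (1:ℝ) H, x v ∈ Set.Icc (0:ℝ) 1) :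
    ∫ v in Set.Icc (1:ℝ) H, (1 / v) * (x v - innerSup x v) ≤ Real.log K + Real.log H / K := by
  have hH : 1 ≤ H := hK.le.trans hKH
  have hK0 : 0 < K := by linarith
  have hHK1 : 1 ≤ H / K := (one_le_div hK0).2 hKH
  have hHKH : H / K ≤ H := div_le_self (by linarith) hK.le
  have hm := innerSup_mono hx h01
  rw [integral_Icc_eq_integral_Ioc, ← intervalIntegral.integral_of_le hH]
  have ix := integrable_aux le_rfl hH hx
  have im := integrable_aux le_rfl hH hm
  have im1 : IntervalIntegrable (fun v => (1 / v) * innerSup x v) volume 1 K :=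
    integrable_aux le_rfl hK.le (hm.mono (Set.Icc_subset_Icc_right hKH))
  have im2 : IntervalIntegrable (fun v => (1 / v) * innerSup x v) volume K H :=
    integrable_aux hK.le hKH (hm.mono (Set.Icc_subset_Icc_left hK.le))
  have ix1 : IntervalIntegrable (fun v => (1 / v) * x v) volume 1 (H / K) :=
    integrable_aux le_rfl hHK1 (hx.mono (Set.Icc_subset_Icc_right hHKH))
  have ix2 : IntervalIntegrable (fun v => (1 / v) * x v) volume (H / K) H :=
    integrable_aux hHK1 hHKH (hx.mono (Set.Icc_subset_Icc_left hHK1))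
  have hdiv : ∀ v ∈ Set.Icc K H, v / K ∈ Set.Icc 1 H := fun v hv =>
    ⟨(one_le_div hK0).2 hv.1, (div_le_self (by linarith [hv.1]) hK.le).trans hv.2⟩
  have iy : IntervalIntegrable (fun v => (1 / v) * x (v / K)) volume K H := by
    apply integrable_aux hK.le hKH
    intro a ha b hb hab
    exact hx (hdiv a ha) (hdiv b hb) (by gcongr)
  have hsplit : ∫ v in (1:ℝ)..H, (1 / v) * (x v - innerSup x v)
      = (∫ v in (1:ℝ)..H, (1 / v) * x v) - ∫ v in (1:ℝ)..H, (1 / v) * innerSup x v := by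
    rw [← intervalIntegral.integral_sub ix im]
    congr 1; ext v; ring
  have hsub : ∫ v in K..H, (1 / v) * x (v / K) = ∫ v in (1:ℝ)..(H / K), (1 / v) * x v := by
    have h := intervalIntegral.integral_comp_div (a := K) (b := H)
      (fun u => (1 / u) * x u) hK0.ne'
    rw [div_self hK0.ne', smul_eq_mul] at h
    have h2 : ∫ v in K..H, (1 / (v / K)) * x (v / K) = K * ∫ v in K..H, (1 / v) * x (v / K) := by
      rw [← intervalIntegral.integral_const_mul]
      congr 1; ext v
      rw [one_div_div]; ring
    rw [h2] at h
    exact mul_left_cancel₀ hK0.ne' h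
  have hlow1 : 0 ≤ ∫ v in (1:ℝ)..K, (1 / v) * innerSup x v := by
    apply intervalIntegral.integral_nonneg hK.le
    intro v hv
    have hv1 : 1 ≤ v := hv.1
    exact mul_nonneg (by positivity) (innerSup_nonneg h01 ⟨hv.1, hv.2.trans hKH⟩)
  have hlow2 : (1 - 1 / K) * ∫ v in K..H, (1 / v) * x (v / K)
      ≤ ∫ v in K..H, (1 / v) * innerSup x v := by
    rw [← intervalIntegral.integral_const_mul]
    apply intervalIntegral.integral_mono_on hKH (iy.const_mul _) im2
    intro v hv
    have hv0 : 0 < v := by linarith [hv.1]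
    have hmem : v / K ∈ Set.Ico 1 v := ⟨(hdiv v hv).1, div_lt_self hv0 hK⟩
    have h := le_csSup (bdd_terms hx h01 ⟨hK.le.trans hv.1, hv.2⟩)
      (Set.mem_image_of_mem (fun w => (1 - w / v) * x w) hmem)
    have he : v / K / v = 1 / K := by field_simp
    simp only [he] at h
    have h' := mul_le_mul_of_nonneg_left h (one_div_pos.2 hv0).le
    calc _ = 1 / v * ((1 - 1 / K) * x (v / K)) := by ring
      _ ≤ _ := h'
  have hup : ∀ a b : ℝ, 1 ≤ a → a ≤ b → b ≤ H →
      IntervalIntegrable (fun v => (1 / v) * x v) volume a b →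
      ∫ v in a..b, (1 / v) * x v ≤ Real.log (b / a) := by
    intro a b ha hab hb hi
    rw [← integral_one_div_of_pos (by linarith) (by linarith)]
    apply intervalIntegral.integral_mono_on hab hi
    · simpa only [mul_one] using integrable_aux ha hab (f := fun _ => (1:ℝ)) monotoneOn_const
    · intro v hv
      have hv1 : 1 ≤ v := ha.trans hv.1
      exact mul_le_of_le_one_right (by positivity) (h01 v ⟨hv1, hv.2.trans hb⟩).2
  have e1 := intervalIntegral.integral_add_adjacent_intervals ix1 ix2
  have e2 := intervalIntegral.integral_add_adjacent_intervals im1 im2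
  have u1 := hup 1 (H / K) le_rfl hHK1 hHKH ix1
  have u2 := hup (H / K) H hHK1 hHKH le_rfl ix2
  rw [div_one] at u1
  have e3 : H / (H / K) = K := by field_simp
  rw [e3] at u2
  have u3 : Real.log (H / K) ≤ Real.log H := Real.log_le_log (by linarith) hHKH
  have u4 := div_le_div_of_nonneg_right (u1.trans u3) hK0.le
  rw [hsplit]
  rw [hsub] at hlow2
  have e4 : (1 - 1 / K) * ∫ v in (1:ℝ)..(H / K), (1 / v) * x v
    = (∫ v in (1:ℝ)..(H / K), (1 / v) * x v) - (∫ v in (1:ℝ)..(H / K), (1 / v) * x v) / K := by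
    ring
  linarith

lemma S_le {H K : ℝ} (hK : 1 < K) (hKH : K ≤ H) : S H ≤ Real.log K + Real.log H / K := by
  apply csSup_le
  · exact ⟨_, fun _ => 0, monotoneOn_const, fun _ _ => by simp, rfl⟩
  · rintro _ ⟨x, hx, h01, rfl⟩
    exact obj_le hK hKH hx h01

/-- The threshold `r = v / w = exp (2A)` separates small deviations, where `log v * (w / v)` is at
least `A`, from large ones, where `(1 - w / v) * log (v / w)` is. -/
lemma key_ineq {A v w : ℝ} (hA : 1 ≤ A) (hv : A * Real.exp (2 * A) ≤ Real.log v)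
    (hw : 1 ≤ w) (hwv : w < v) : (1 - w / v) * Real.log w ≤ Real.log v - A := by
  have hw0 : 0 < w := by linarith
  have hv0 : 0 < v := by linarith
  set q := w / v with hq
  have hq0 : 0 < q := by positivity
  have hq1 : q < 1 := (div_lt_one hv0).2 hwv
  have hlq : Real.log w = Real.log v + Real.log q := by
    rw [hq, Real.log_div hw0.ne' hv0.ne']; ring
  have hlq0 : Real.log q ≤ 0 := Real.log_nonpos hq0.le hq1.le
  have hlw : 0 ≤ Real.log w := Real.log_nonneg hw
  by_cases hc : q ≤ Real.exp (-(2 * A))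
  · have h1 : Real.log q ≤ -(2 * A) := (Real.log_le_iff_le_exp hq0).2 hc
    have h2 : q ≤ 1 / 2 := by
      have h3 : 2 * A + 1 ≤ Real.exp (2 * A) := Real.add_one_le_exp _
      rw [Real.exp_neg] at hc
      refine hc.trans ?_
      rw [one_div]
      exact inv_anti₀ (by norm_num) (by linarith)
    nlinarith
  · push Not at hc
    have hpos : 0 ≤ Real.log v := Real.log_nonneg (by linarith)
    have h1 : A ≤ q * Real.log v := by
      calc A = Real.exp (-(2 * A)) * (A * Real.exp (2 * A)) := by
            rw [Real.exp_neg]; field_simp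
        _ ≤ Real.exp (-(2 * A)) * Real.log v := by gcongr
        _ ≤ q * Real.log v := by gcongr
    rw [hlq]
    nlinarith

lemma le_S {A H : ℝ} (hA : 1 ≤ A) (hH : 2 * (A * Real.exp (2 * A)) ≤ Real.log H)
    (hH2 : 2 ≤ H) : A / 2 ≤ S H := by
  set T := A * Real.exp (2 * A) with hT
  have hT0 : 0 < T := by positivity
  set L := Real.log H with hL
  have hL0 : 0 < L := by linarith
  have hH0 : 0 < H := by linarith
  set x : ℝ → ℝ := fun v => Real.log v / L with hxdef
  have hx : MonotoneOn x (Set.Icc 1 H) := by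
    intro a ha b hb hab
    exact div_le_div_of_nonneg_right (Real.log_le_log (by linarith [ha.1]) hab) hL0.le
  have h01 : ∀ v ∈ Set.Icc (1:ℝ) H, x v ∈ Set.Icc (0:ℝ) 1 := fun v hv =>
    ⟨div_nonneg (Real.log_nonneg hv.1) hL0.le,
      (div_le_one hL0).2 (Real.log_le_log (by linarith [hv.1]) hv.2)⟩
  have hmem : ∫ v in Set.Icc (1:ℝ) H, (1 / v) * (x v - innerSup x v) ≤ S H := by
    apply le_csSup
    · refine ⟨Real.log 2 + Real.log H / 2, ?_⟩
      rintro _ ⟨y, hy, hy01, rfl⟩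
      exact obj_le (by norm_num) hH2 hy hy01
    · exact ⟨x, hx, h01, rfl⟩
  refine le_trans ?_ hmem
  rw [integral_Icc_eq_integral_Ioc, ← intervalIntegral.integral_of_le (by linarith)]
  have hm := innerSup_mono hx h01
  set V := Real.exp T with hV
  have hV1 : 1 ≤ V := Real.one_le_exp hT0.le
  have hVH : V ≤ H := (Real.le_log_iff_exp_le hH0).1 (by linarith)
  have key : ∀ a b : ℝ, 1 ≤ a → a ≤ b → b ≤ H →
      IntervalIntegrable (fun v => (1 / v) * (x v - innerSup x v)) volume a b := by
    intro a b ha hab hb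
    have hs : Set.Icc a b ⊆ Set.Icc 1 H := Set.Icc_subset_Icc ha hb
    have := (integrable_aux ha hab (hx.mono hs)).sub (integrable_aux ha hab (hm.mono hs))
    exact this.congr (fun v _ => (mul_sub _ _ _).symm)
  rw [← intervalIntegral.integral_add_adjacent_intervals (key 1 V le_rfl hV1 hVH)
    (key V H hV1 hVH le_rfl)]
  have p1 : 0 ≤ ∫ v in (1:ℝ)..V, (1 / v) * (x v - innerSup x v) := by
    apply intervalIntegral.integral_nonneg hV1
    intro v hv
    have hv1 : 1 ≤ v := hv.1
    exact mul_nonneg (by positivity)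
      (sub_nonneg.2 (innerSup_le hx h01 ⟨hv.1, hv.2.trans hVH⟩))
  have p2 : (A / L) * ∫ v in V..H, 1 / v ≤ ∫ v in V..H, (1 / v) * (x v - innerSup x v) := by
    rw [← intervalIntegral.integral_const_mul]
    apply intervalIntegral.integral_mono_on hVH _ (key V H hV1 hVH le_rfl)
    · intro v hv
      have hv0 : 0 < v := by linarith [hv.1]
      have hlv : T ≤ Real.log v := (Real.le_log_iff_exp_le hv0).2 hv.1
      have hAT : A ≤ T := le_mul_of_one_le_right (by linarith) (Real.one_le_exp (by linarith))
      have hin : innerSup x v ≤ (Real.log v - A) / L := by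
        refine Real.sSup_le ?_ (div_nonneg (by linarith) hL0.le)
        rintro _ ⟨w, hw, rfl⟩
        have := div_le_div_of_nonneg_right (key_ineq hA hlv hw.1 hw.2) hL0.le
        simp only [hxdef]
        rwa [← mul_div_assoc]
      have h3 : A / L ≤ x v - innerSup x v := by
        have : A / L = x v - (Real.log v - A) / L := by simp only [hxdef]; ring
        linarith
      rw [mul_comm]
      gcongr
    · have := (integrable_aux hV1 hVH (f := fun _ => (1:ℝ)) monotoneOn_const).const_mul (A / L)
      simpa only [mul_one] using this
  rw [integral_one_div_of_pos (by positivity) hH0, Real.log_div hH0.ne' (by positivity),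
    hV, Real.log_exp] at p2
  have p3 : A / 2 ≤ A / L * (Real.log H - T) := by
    rw [div_mul_eq_mul_div, le_div_iff₀ hL0]
    nlinarith
  linarith

/-- The mean-based revenue of the truncated equal revenue curve lies strictly
between the monopoly revenue (which equals `1`) and the welfare (which equals
`1 + log H`), in a doubly-unbounded sense: for every `C > 0`, for all large
enough `H`, `S H ≥ C` while `1 + log H ≥ C * (S H + 1)`. -/
theorem mbrev_gap_corollary : ∀ C : ℝ, 0 < C → ∃ H₀ : ℝ, 1 < H₀ ∧
    ∀ H : ℝ, H₀ ≤ H → C ≤ S H ∧ C * (S H + 1) ≤ 1 + Real.log H := by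
  intro C hC
  set A := 2 * C + 1 with hA
  -- With `K = A > 2C`, the term `C * log H / K` uses up at most half of `log H`.
  set M := 2 * (A * Real.exp (2 * A)) + 2 * (C * (Real.log A + 1)) with hM
  have hlA : 0 ≤ Real.log A := Real.log_nonneg (by linarith)
  have hA0 : 0 < A := by linarith
  have hM1 : 2 * (A * Real.exp (2 * A)) ≤ M := by
    have : 0 ≤ 2 * (C * (Real.log A + 1)) := by positivity
    linarith
  have hM2 : 2 * (C * (Real.log A + 1)) ≤ M := by
    have : 0 ≤ 2 * (A * Real.exp (2 * A)) := by positivity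
    linarith
  refine ⟨max (Real.exp M) (A + 1), lt_max_of_lt_right (by linarith), fun H hH => ?_⟩
  have hHA : A + 1 ≤ H := (le_max_right _ _).trans hH
  have hHM : M ≤ Real.log H :=
    (Real.le_log_iff_exp_le (by linarith)).2 ((le_max_left _ _).trans hH)
  constructor
  · have := le_S (A := A) (H := H) (by linarith) (hM1.trans hHM) (by linarith)
    linarith
  · have h1 := S_le (K := A) (H := H) (by linarith) (by linarith)
    have hlH : 0 ≤ Real.log H := Real.log_nonneg (by linarith)
    have h2 : C * (Real.log H / A) ≤ Real.log H / 2 := by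
      rw [← mul_div_assoc, div_le_div_iff₀ hA0 (by norm_num)]
      nlinarith
    have h3 := mul_le_mul_of_nonneg_left h1 hC.le
    nlinarith
end

section
/- Follow-the-Perturbed-Leader is mean-based (key probabilistic step): let K ≥ 1, let ε > 0, let σ : {1,…,K} → ℝ, let c ≥ 0, and suppose the indices i, j satisfy σ_i + c ≤ σ_j. Let P be the product of K independent exponential distributions with rate ε on [0,∞) (density x ↦ ε·e^{−εx}). Then P({per ∈ [0,∞)^K : σ_i + per_i ≥ σ_k + per_k for all k ∈ {1,…,K}}) ≤ exp(−ε·c); that is, the probability that arm i has the largest perturbed score is at most exp(−ε·c). -/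
/-!
Exponential perturbations are almost surely nonnegative, so if arm `i` has the largest perturbed
score then `per i ≥ (σ j - σ i) + per j ≥ c` outside a null set. The probability of `c ≤ per i` is
a one-dimensional exponential tail, equal to `exp (-ε c)`, because each coordinate of the product
measure has law `expMeasure ε`. Independence plays no role beyond fixing the marginals.
-/

open MeasureTheory ProbabilityTheory

theorem expMeasure_Iic {ε : ℝ} (hε : 0 < ε) {c : ℝ} (hc : 0 ≤ c) :
    expMeasure ε (Set.Iic c) = ENNReal.ofReal (1 - Real.exp (-(ε * c))) := by
  have := isProbabilityMeasure_expMeasure hε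
  rw [← ofReal_cdf, cdf_expMeasure_eq hε, if_pos hc]

/-- Points are null for the exponential law, so the closed half-line carries the usual tail mass. -/
theorem expMeasure_Ici {ε : ℝ} (hε : 0 < ε) {c : ℝ} (hc : 0 ≤ c) :
    expMeasure ε (Set.Ici c) = ENNReal.ofReal (Real.exp (-(ε * c))) := by
  have := isProbabilityMeasure_expMeasure hε
  have : NullSingletonClass (expMeasure ε) := by
    unfold expMeasure gammaMeasure
    infer_instance
  have hexp : Real.exp (-(ε * c)) ≤ 1 := Real.exp_le_one_iff.2 (by nlinarith)
  rw [← measure_congr Ioi_ae_eq_Ici, ← Set.compl_Iic, prob_compl_eq_one_sub measurableSet_Iic,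
    expMeasure_Iic hε hc, ← ENNReal.ofReal_one, ← ENNReal.ofReal_sub _ (by linarith)]
  congr 1
  ring

theorem expMeasure_Iio_zero {ε : ℝ} (hε : 0 < ε) : expMeasure ε (Set.Iio 0) = 0 :=
  measure_mono_null Set.Iio_subset_Iic_self (by simp [expMeasure_Iic hε le_rfl])

/-- Follow-the-Perturbed-Leader is mean-based (key probabilistic step): if
`σ i + c ≤ σ j` and the perturbations are i.i.d. exponentials of rate `ε`,
then the probability that arm `i` has the largest perturbed score is at most
`exp (-ε c)`. -/
theorem ftpl_mean_based_step (K : ℕ) (hK : 1 ≤ K) (ε : ℝ) (hε : 0 < ε)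
    (σ : Fin K → ℝ) (c : ℝ) (hc : 0 ≤ c) (i j : Fin K)
    (hij : σ i + c ≤ σ j) :
    (Measure.pi fun _ : Fin K => expMeasure ε)
        {per : Fin K → ℝ | ∀ k : Fin K, σ k + per k ≤ σ i + per i}
      ≤ ENNReal.ofReal (Real.exp (-(ε * c))) := by
  have := isProbabilityMeasure_expMeasure hε
  have marginal (k : Fin K) {s : Set ℝ} (hs : MeasurableSet s) :
      (Measure.pi fun _ : Fin K => expMeasure ε) (Function.eval k ⁻¹' s) = expMeasure ε s :=
    (measurePreserving_eval (fun _ : Fin K => expMeasure ε) k).measure_preimage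
      hs.nullMeasurableSet
  calc _ ≤ (Measure.pi fun _ : Fin K => expMeasure ε)
          (Function.eval i ⁻¹' Set.Ici c ∪ Function.eval j ⁻¹' Set.Iio 0) := by
        refine measure_mono fun per hper => ?_
        have hj := hper j
        rcases lt_or_ge (per j) 0 with h | h
        · exact Or.inr h
        · left
          change c ≤ per i
          linarith
    _ ≤ _ := measure_union_le _ _
    _ = ENNReal.ofReal (Real.exp (-(ε * c))) := by
        rw [marginal i measurableSet_Ici, marginal j measurableSet_Iio, expMeasure_Ici hε hc,
          expMeasure_Iio_zero hε, add_zero]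
end

section
/- Reduction from the auction LP to the mean-based revenue LP (core of the theorem that no seller strategy beats MBRev(D)·T + o(T) against a conservative no-regret buyer): let (v,q) be a value distribution, let K ≥ 1 with bids 0 = b_1 ≤ b_2 ≤ ⋯ ≤ b_K ≤ 1, and let δ' ≥ 0. Suppose u ∈ ℝ^m, y ∈ [0,1]^K, and p̄ ∈ ℝ^K satisfy: 0 ≤ p̄_j ≤ b_j·y_j for all j ∈ {1,…,K}; and u_i ≥ v_i·y_j − p̄_j − δ' for all i ∈ {1,…,m} and j ∈ {1,…,K} with b_j ≤ v_i. For each i let j(i) be the largest index j with b_j ≤ v_i (which exists since b_1 = 0 ≤ v_i) and set x_i = y_{j(i)}. Then ∑_{i=1}^m q_i·(v_i·x_i − u_i) ≤ MBRev(v,q) + δ'. -/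
/-!
A feasible point of the auction LP becomes feasible for the program defining `MBRev` after every
utility is raised by `δ'`, with the same allocation `x i = y (ji i)`. Type `i` may use the largest
admissible bid of any type `j ≤ i`; that bid wins with probability `x j` and costs at most
`b (ji j) * x j ≤ v j * x j`, so `u i + δ' ≥ (v i - v j) * x j`. The case `j = i` gives
`u i + δ' ≥ 0`. Raising the utilities lowers the objective by exactly `δ'`, as the `q i` sum to one.
-/

open Finset

/-- The objective values of the program defining `MBRev` are at most `1`, so that its supremum is
a genuine one rather than the default value `0`. -/
theorem mbrev_values_bddAbove (m : ℕ) (v q : Fin m → ℝ)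
    (hv1 : ∀ i, v i ≤ 1) (hq : ∀ i, 0 ≤ q i) (hqs : ∑ i, q i = 1) :
    BddAbove { r : ℝ | ∃ x u : Fin m → ℝ,
      (∀ i, 0 ≤ x i ∧ x i ≤ 1) ∧ (∀ i, 0 ≤ u i) ∧
      (∀ i j, j < i → (v i - v j) * x j ≤ u i) ∧
      r = ∑ i, q i * (v i * x i - u i) } := by
  refine ⟨1, ?_⟩
  rintro r ⟨x, u, hx, hu, -, rfl⟩
  rw [← hqs]
  refine Finset.sum_le_sum fun i _ => mul_le_of_le_one_right (hq i) ?_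
  have h := mul_le_one₀ (hv1 i) (hx i).1 (hx i).2
  linarith [hu i]

/-- Reduction from the auction LP to the mean-based revenue LP: feasible
points of the auction LP (with slack `δ'`) have objective value at most
`MBRev (v, q) + δ'`.  Here `ji i` is the largest bid index `j` with
`b j ≤ v i`, and `x i = y (ji i)`. -/
theorem auction_lp_le_mbrev (m K : ℕ) (hm : 0 < m) (hK : 0 < K)
    (v q : Fin m → ℝ)
    (hv : StrictMono v) (hv0 : ∀ i, 0 ≤ v i) (hv1 : ∀ i, v i ≤ 1)
    (hq : ∀ i, 0 ≤ q i) (hqs : ∑ i, q i = 1)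
    (b : Fin K → ℝ) (hb0 : b ⟨0, hK⟩ = 0) (hbmono : Monotone b)
    (hb1 : ∀ j, b j ≤ 1)
    (δ' : ℝ) (hδ' : 0 ≤ δ')
    (u : Fin m → ℝ) (y : Fin K → ℝ) (pbar : Fin K → ℝ)
    (hy : ∀ j, 0 ≤ y j ∧ y j ≤ 1)
    (hpbar : ∀ j, 0 ≤ pbar j ∧ pbar j ≤ b j * y j)
    (hu : ∀ i j, b j ≤ v i → v i * y j - pbar j - δ' ≤ u i)
    (ji : Fin m → Fin K)
    (hji1 : ∀ i, b (ji i) ≤ v i)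
    (hji2 : ∀ i j, b j ≤ v i → j ≤ ji i)
    (x : Fin m → ℝ) (hx : ∀ i, x i = y (ji i)) :
    ∑ i, q i * (v i * x i - u i) ≤ MBRev m v q + δ' := by
  have hobj : ∑ i, q i * (v i * x i - u i) =
      ∑ i, q i * (v i * x i - (u i + δ')) + δ' := by
    have h : ∀ i, q i * (v i * x i - u i) =
        q i * (v i * x i - (u i + δ')) + q i * δ' := fun i => by ring
    rw [Finset.sum_congr rfl fun i _ => h i, Finset.sum_add_distrib, ← Finset.sum_mul, hqs, one_mul]
  -- A buyer of value `v i ≥ v j` may use the bid of type `j`, whose payment is at most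
  -- `b (ji j) * x j ≤ v j * x j`.
  have hdev : ∀ i j, v j ≤ v i → (v i - v j) * x j ≤ u i + δ' := by
    intro i j hij
    have h1 := hu i (ji j) ((hji1 j).trans hij)
    have h2 := (hpbar (ji j)).2
    have h3 := mul_le_mul_of_nonneg_right (hji1 j) (hy (ji j)).1
    rw [hx j]
    linarith
  rw [hobj]
  gcongr
  refine le_csSup (mbrev_values_bddAbove m v q hv1 hq hqs)
    ⟨x, fun i => u i + δ', fun i => by rw [hx i]; exact hy _, fun i => ?_,
      fun i j hij => hdev i j (hv hij).le, rfl⟩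
  -- Nonnegativity of the new utility is the case of type `i` using its own bid.
  simpa using hdev i i le_rfl
end
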